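/- arXiv:1709.00132 — 2 statements merged into one kernel-verified Lean document; each statement's English description precedes it below -/
import Mathlib

section
/- Let 𝕄, 𝕂, ℂ be finite nonempty types with |𝕄| = |𝕂| = |ℂ|, and let e : 𝕄 × 𝕂 → ℂ be an encoding function such that for every key k the map m ↦ e(m,k) is injective (so messages can be decoded from the ciphertext and the key). Let 𝔐 be a random message with full support on 𝕄 and let 𝔎 be a random key independent of 𝔐. Then the ciphertext e(𝔐, 𝔎) is independent of 𝔐 (perfect secrecy) if and only if both: (i) for every pair (m, c) ∈ 𝕄 × ℂ there exists a unique key k ∈ 𝕂 with e(m,k) = c; and (ii) 𝔎 is uniformly distributed on 𝕂. -/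
/-!
Independence of message and key gives
`P(C = c, M = x) = P(M = x) * P(K ∈ {k | e (x, k) = c})` (`measure_cipher_inter_message`),
so, as `P(M = x) > 0`, secrecy says exactly that `P(K ∈ {k | e (x, k) = c}) = P(C = c)` for all
`x` and `c`.

Assume secrecy. Each `e (·, k)` is a bijection by cardinality, so encoding under a key of positive
probability reaches every ciphertext, and `P(C = c) > 0`. Hence `{k | e (x, k) = c}` is never empty:
`e (x, ·)` is surjective, and bijective by cardinality. Fixing one `c`, every key `k` is the unique
key taking some message to `c`, so `P(K = k) = P(C = c)` does not depend on `k`, and the key is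
uniform. Conversely, under (i) and (ii), `P(C = c, M = x) = P(M = x) / |𝕂|`, and summing over `x`
gives `P(C = c) = 1 / |𝕂|`.
-/

open MeasureTheory ProbabilityTheory

/-- The joint law of ciphertext and message, for independent message and key. -/
lemma measure_cipher_inter_message {Ω 𝕄 𝕂 𝕮 : Type*} [MeasurableSpace Ω] {μ : Measure Ω}
    [MeasurableSpace 𝕄] [DiscreteMeasurableSpace 𝕄] [MeasurableSpace 𝕂] [DiscreteMeasurableSpace 𝕂]
    (e : 𝕄 × 𝕂 → 𝕮) {M : Ω → 𝕄} {K : Ω → 𝕂} (hindep : IndepFun M K μ) (x : 𝕄) (c : 𝕮) :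
    μ ((fun ω => e (M ω, K ω)) ⁻¹' {c} ∩ M ⁻¹' {x}) =
      μ (M ⁻¹' {x}) * μ (K ⁻¹' {k | e (x, k) = c}) := by
  rw [← hindep.measure_inter_preimage_eq_mul _ _ (.of_discrete) (.of_discrete)]
  congr 1
  ext ω
  simp only [Set.mem_inter_iff, Set.mem_preimage, Set.mem_singleton_iff, Set.mem_ofPred_eq]
  constructor
  · rintro ⟨h, rfl⟩
    exact ⟨rfl, h⟩
  · rintro ⟨rfl, h⟩
    exact ⟨h, rfl⟩

/-- A random variable on a finite type whose point probabilities are all equal is uniform. -/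
lemma map_eq_uniform_of_const {Ω α : Type*} [MeasurableSpace Ω] {μ : Measure Ω}
    [IsProbabilityMeasure μ] [Fintype α] [Nonempty α] [MeasurableSpace α]
    [DiscreteMeasurableSpace α] {X : Ω → α} (hX : Measurable X) {q : ENNReal}
    (hq : ∀ a, μ (X ⁻¹' {a}) = q) :
    Measure.map X μ = (PMF.uniformOfFintype α).toMeasure := by
  have hsum : ∑ a : α, μ (X ⁻¹' {a}) = 1 := by
    rw [sum_measure_preimage_singleton _ fun a _ => hX (.singleton a)]
    simp
  simp only [hq, Finset.sum_const, Finset.card_univ, nsmul_eq_mul] at hsum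
  refine Measure.ext_of_singleton fun a => ?_
  rw [Measure.map_apply hX (.singleton a), hq, PMF.toMeasure_apply_singleton _ _ (.singleton a),
    PMF.uniformOfFintype_apply]
  exact ENNReal.eq_inv_of_mul_eq_one_left (by rwa [mul_comm])

/-- Shannon's perfect secrecy theorem.  Let `𝕄, 𝕂, 𝕮` be finite nonempty
(discrete) types with `|𝕄| = |𝕂| = |𝕮|`, and let `e : 𝕄 × 𝕂 → 𝕮` be an encoding function
such that for every key `k` the map `m ↦ e (m, k)` is injective.  Let `𝔐` be a random
message with full support and `𝔎` a random key independent of `𝔐`.  Then the ciphertext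
`e (𝔐, 𝔎)` is independent of `𝔐` (perfect secrecy) if and only if (i) for every pair
`(m, c)` there is a unique key `k` with `e (m, k) = c`, and (ii) `𝔎` is uniformly
distributed on `𝕂`. -/
theorem stmt8 {Ω 𝕄 𝕂 𝕮 : Type*} [MeasureSpace Ω] [IsProbabilityMeasure (ℙ : Measure Ω)]
    [Fintype 𝕄] [Nonempty 𝕄] [MeasurableSpace 𝕄] [DiscreteMeasurableSpace 𝕄]
    [Fintype 𝕂] [Nonempty 𝕂] [MeasurableSpace 𝕂] [DiscreteMeasurableSpace 𝕂]
    [Fintype 𝕮] [Nonempty 𝕮] [MeasurableSpace 𝕮] [DiscreteMeasurableSpace 𝕮]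
    (hMK : Fintype.card 𝕄 = Fintype.card 𝕂) (hKC : Fintype.card 𝕂 = Fintype.card 𝕮)
    (e : 𝕄 × 𝕂 → 𝕮)
    (hdec : ∀ k : 𝕂, Function.Injective fun m => e (m, k))
    (𝔐 : Ω → 𝕄) (𝔎 : Ω → 𝕂)
    (h𝔐 : Measurable 𝔐) (h𝔎 : Measurable 𝔎)
    (hindep : IndepFun 𝔐 𝔎 ℙ)
    (hsupp : ∀ x : 𝕄, ℙ {ω | 𝔐 ω = x} ≠ 0) :
    IndepFun (fun ω => e (𝔐 ω, 𝔎 ω)) 𝔐 ℙ ↔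
      ((∀ (x : 𝕄) (c : 𝕮), ∃! k : 𝕂, e (x, k) = c) ∧
        Measure.map 𝔎 ℙ = (PMF.uniformOfFintype 𝕂).toMeasure) := by
  have hC : Measurable fun ω => e (𝔐 ω, 𝔎 ω) :=
    (Measurable.of_discrete (f := e)).comp (h𝔐.prodMk h𝔎)
  have hjoint := measure_cipher_inter_message e hindep
  have hbij : ∀ k, Function.Bijective fun m => e (m, k) := fun k =>
    (Fintype.bijective_iff_injective_and_card _).2 ⟨hdec k, hMK.trans hKC⟩
  constructor
  · intro hsec
    have hkey : ∀ x c, ℙ (𝔎 ⁻¹' {k | e (x, k) = c}) = ℙ ((fun ω => e (𝔐 ω, 𝔎 ω)) ⁻¹' {c}) := by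
      intro x c
      have h := hjoint x c
      rw [hsec.measure_inter_preimage_eq_mul _ _ (.singleton c) (.singleton x), mul_comm] at h
      exact ((ENNReal.mul_right_inj (hsupp x) (measure_ne_top _ _)).1 h).symm
    obtain ⟨k₀, hk₀⟩ : ∃ k, ℙ (𝔎 ⁻¹' {k}) ≠ 0 := by
      by_contra! h
      have hsum := sum_measure_preimage_singleton (μ := ℙ) (f := 𝔎) Finset.univ
        fun a _ => h𝔎 (.singleton a)
      simp [h] at hsum
    have hpos : ∀ c, ℙ ((fun ω => e (𝔐 ω, 𝔎 ω)) ⁻¹' {c}) ≠ 0 := by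
      intro c
      obtain ⟨m, hm⟩ := (hbij k₀).2 c
      rw [← hkey m c]
      refine fun h => hk₀ (measure_mono_null (Set.preimage_mono ?_) h)
      rintro k rfl
      exact hm
    have hbij' : ∀ x, Function.Bijective fun k => e (x, k) := by
      intro x
      refine (Fintype.bijective_iff_surjective_and_card _).2 ⟨fun c => ?_, hKC⟩
      by_contra! h
      refine hpos c ?_
      rw [← hkey x c]
      simp [h]
    refine ⟨fun x c => (hbij' x).existsUnique c, ?_⟩
    obtain ⟨c⟩ := ‹Nonempty 𝕮›
    refine map_eq_uniform_of_const h𝔎 (q := ℙ ((fun ω => e (𝔐 ω, 𝔎 ω)) ⁻¹' {c})) fun k => ?_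
    obtain ⟨m, hm⟩ := (hbij k).2 c
    rw [← hkey m c]
    congr 2
    ext k'
    exact ⟨fun h => h ▸ hm, fun h => (hbij' m).1 (h.trans hm.symm)⟩
  · rintro ⟨huniq, hunif⟩
    have hfib : ∀ x c, ℙ (𝔎 ⁻¹' {k | e (x, k) = c}) = (Fintype.card 𝕂 : ENNReal)⁻¹ := by
      intro x c
      obtain ⟨k, hk, hk'⟩ := huniq x c
      have hset : {k | e (x, k) = c} = {k} := by
        ext k'
        exact ⟨hk' k', fun h => h ▸ hk⟩
      rw [hset, ← Measure.map_apply h𝔎 (.singleton k), hunif,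
        PMF.toMeasure_apply_singleton _ _ (.singleton k), PMF.uniformOfFintype_apply]
    have hmarg : ∀ c, ℙ ((fun ω => e (𝔐 ω, 𝔎 ω)) ⁻¹' {c}) = (Fintype.card 𝕂 : ENNReal)⁻¹ := by
      intro c
      -- Restricting to the event `C = c` turns the sum over messages into a fibre sum of `𝔐`.
      have h := sum_measure_preimage_singleton
        (μ := (ℙ : Measure Ω).restrict ((fun ω => e (𝔐 ω, 𝔎 ω)) ⁻¹' {c})) (f := 𝔐) Finset.univ
        fun x _ => h𝔐 (.singleton x)
      have h1 := sum_measure_preimage_singleton (μ := (ℙ : Measure Ω)) (f := 𝔐) Finset.univ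
        fun x _ => h𝔐 (.singleton x)
      simp only [Finset.coe_univ, Set.preimage_univ, measure_univ] at h1
      simp only [Measure.restrict_apply (h𝔐 (.singleton _)), Set.inter_comm (𝔐 ⁻¹' _), hjoint,
        hfib, ← Finset.sum_mul, h1, one_mul, Finset.coe_univ, Set.preimage_univ,
        Measure.restrict_apply_univ] at h
      exact h.symm
    rw [indepFun_iff_map_prod_eq_prod_map_map hC.aemeasurable h𝔐.aemeasurable]
    refine Measure.ext_of_singleton fun ⟨c, x⟩ => ?_
    rw [Measure.map_apply (hC.prodMk h𝔐) (.singleton _), ← Set.singleton_prod_singleton,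
      Measure.prod_prod, Measure.map_apply hC (.singleton c), Measure.map_apply h𝔐 (.singleton x),
      Set.mk_preimage_prod, hjoint, hfib, hmarg, mul_comm]
end

section
/- Let 𝕄, 𝕂, ℂ be finite nonempty types, let e : 𝕄 × 𝕂 → ℂ be an encoding function such that for every key k the map m ↦ e(m,k) is injective (decodability), let 𝔐 be a random message on 𝕄 and 𝔎 a random key on 𝕂 independent of 𝔐, and suppose the ciphertext e(𝔐, 𝔎) is independent of 𝔐 (perfect secrecy). Then H(𝔎) ≥ H(𝔐), where H denotes Shannon entropy: H(X) = -∑_x P(X = x) · log P(X = x). -/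
/-! Write `C = e (𝔐, 𝔎)` for the ciphertext. The proof shows `H(𝔐) ≤ H(C) ≤ H(𝔎)`.

* For each fixed key `k` the law of `e (𝔐, k)` has entropy `H(𝔐)`, because encoding with `k` is
  injective (`sum_negMulLog_push`). By independence the law of `C` is the mixture of these laws with
  weights `P(𝔎 = k)`, so Jensen's inequality for the concave function `x ↦ -x log x` gives
  `H(𝔐) ≤ H(C)`.
* Fix a message `m₀` of positive probability. By perfect secrecy and independence of message and
  key, `C` has the same law as `e (m₀, 𝔎)`, a function of the key, and a function of a random
  variable has no more entropy than the variable itself, by subadditivity of `x ↦ -x log x`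
  (`negMulLog_sum_le`). Hence `H(C) ≤ H(𝔎)`. -/


open MeasureTheory ProbabilityTheory

/-- `x ↦ -x log x` is subadditive on the nonnegative reals. -/
theorem negMulLog_sum_le {ι : Type*} (s : Finset ι) (f : ι → ℝ) (hf : ∀ i ∈ s, 0 ≤ f i) :
    Real.negMulLog (∑ i ∈ s, f i) ≤ ∑ i ∈ s, Real.negMulLog (f i) := by
  simp only [Real.negMulLog]
  rw [← Finset.sum_neg_distrib, Finset.sum_mul]
  refine Finset.sum_le_sum fun i hi => ?_
  rcases (hf i hi).eq_or_lt with h0 | hpos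
  · simp [← h0]
  · have hlog := Real.log_le_log hpos (Finset.single_le_sum hf hi)
    nlinarith

open Classical in
/-- The image of a finite distribution `p` under an injective map `g` has the entropy of `p`. -/
theorem sum_negMulLog_push {α β : Type*} [Fintype α] [Fintype β] (g : α → β)
    (hg : Function.Injective g) (p : α → ℝ) :
    ∑ b, Real.negMulLog (∑ a, if g a = b then p a else 0) = ∑ a, Real.negMulLog (p a) := by
  symm
  refine Finset.sum_of_injOn g hg.injOn (by simp) ?_ ?_
  · intro b _ hb
    have hne : ∀ a, g a ≠ b := by simpa using hb
    simp [hne]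
  · intro a _
    simp [hg.eq_iff]

open Classical in
theorem measureReal_preimage_eq_sum {Ω α : Type*} [MeasurableSpace Ω] {μ : Measure Ω}
    [IsProbabilityMeasure μ] [Fintype α] [MeasurableSpace α] [DiscreteMeasurableSpace α]
    {X : Ω → α} (hX : Measurable X) (S : α → Prop) :
    μ.real {ω | S (X ω)} = ∑ x, if S x then μ.real {ω | X ω = x} else 0 := by
  have h := sum_measureReal_preimage_singleton (μ := μ) (Finset.univ.filter S) (f := X)
    (fun y _ => hX (MeasurableSet.of_discrete))
  rw [Finset.sum_filter] at h
  have h_set : {ω | S (X ω)} = X ⁻¹' ↑(Finset.univ.filter S) := by ext; simp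
  rw [h_set, ← h]
  rfl

/-- `H(𝔎) ≥ H(𝔐)` for perfectly secret ciphers.  Let `𝕄, 𝕂, 𝕮` be finite
nonempty (discrete) types, `e : 𝕄 × 𝕂 → 𝕮` an encoding function which is injective in the
message for every fixed key, `𝔐` a random message and `𝔎` a random key independent of `𝔐`,
and suppose the ciphertext `e (𝔐, 𝔎)` is independent of `𝔐` (perfect secrecy).  Then the
Shannon entropy of the key is at least that of the message, where
`H(X) = ∑_x -P(X = x)·log P(X = x)`. -/
theorem stmt9 {Ω 𝕄 𝕂 𝕮 : Type*} [MeasureSpace Ω] [IsProbabilityMeasure (ℙ : Measure Ω)]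
    [Fintype 𝕄] [Nonempty 𝕄] [MeasurableSpace 𝕄] [DiscreteMeasurableSpace 𝕄]
    [Fintype 𝕂] [Nonempty 𝕂] [MeasurableSpace 𝕂] [DiscreteMeasurableSpace 𝕂]
    [Fintype 𝕮] [Nonempty 𝕮] [MeasurableSpace 𝕮] [DiscreteMeasurableSpace 𝕮]
    (e : 𝕄 × 𝕂 → 𝕮)
    (hdec : ∀ k : 𝕂, Function.Injective fun m => e (m, k))
    (𝔐 : Ω → 𝕄) (𝔎 : Ω → 𝕂)
    (h𝔐 : Measurable 𝔐) (h𝔎 : Measurable 𝔎)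
    (hindep : IndepFun 𝔐 𝔎 ℙ)
    (hsecrecy : IndepFun (fun ω => e (𝔐 ω, 𝔎 ω)) 𝔐 ℙ) :
    ∑ x : 𝕄, Real.negMulLog ((ℙ {ω | 𝔐 ω = x}).toReal)
      ≤ ∑ k : 𝕂, Real.negMulLog ((ℙ {ω | 𝔎 ω = k}).toReal) := by
  classical
  set p : 𝕄 → ℝ := fun m => (ℙ : Measure Ω).real {ω | 𝔐 ω = m} with hp
  set q : 𝕂 → ℝ := fun k => (ℙ : Measure Ω).real {ω | 𝔎 ω = k} with hq
  set r : 𝕮 → ℝ := fun c => (ℙ : Measure Ω).real {ω | e (𝔐 ω, 𝔎 ω) = c} with hr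
  change ∑ m, Real.negMulLog (p m) ≤ ∑ k, Real.negMulLog (q k)
  have hp0 : ∀ m, 0 ≤ p m := fun m => measureReal_nonneg
  have hq0 : ∀ k, 0 ≤ q k := fun k => measureReal_nonneg
  have hp1 : ∑ m, p m = 1 := by
    simpa using (measureReal_preimage_eq_sum (μ := ℙ) h𝔐 (fun _ => True)).symm
  have hq1 : ∑ k, q k = 1 := by
    simpa using (measureReal_preimage_eq_sum (μ := ℙ) h𝔎 (fun _ => True)).symm
  have hpair : Measurable fun ω => (𝔐 ω, 𝔎 ω) := h𝔐.prodMk h𝔎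
  have hjoint : ∀ m k, (ℙ : Measure Ω).real {ω | (𝔐 ω, 𝔎 ω) = (m, k)} = p m * q k := by
    intro m k
    have h := hindep.measure_inter_preimage_eq_mul {m} {k} .of_discrete .of_discrete
    have h_set : {ω | (𝔐 ω, 𝔎 ω) = (m, k)} = 𝔐 ⁻¹' {m} ∩ 𝔎 ⁻¹' {k} := by ext; simp
    rw [h_set, measureReal_def, h, ENNReal.toReal_mul]
    rfl
  -- The ciphertext law is the mixture, over keys, of the laws of `e (𝔐, k)`.
  have hmix : ∀ c, r c = ∑ k, q k * ∑ m, if e (m, k) = c then p m else 0 := by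
    intro c
    have h := measureReal_preimage_eq_sum (μ := ℙ) hpair (fun x => e x = c)
    simp only [Fintype.sum_prod_type, hjoint] at h
    rw [Finset.sum_comm] at h
    refine h.trans (Finset.sum_congr rfl fun k _ => ?_)
    rw [Finset.mul_sum]
    refine Finset.sum_congr rfl fun m _ => ?_
    split_ifs <;> ring
  obtain ⟨m₀, hm₀⟩ : ∃ m, 0 < p m := by
    by_contra! hle
    have hle0 : ∑ m, p m ≤ 0 := Finset.sum_nonpos fun m _ => hle m
    linarith
  -- By perfect secrecy, the ciphertext law is the law of `e (m₀, 𝔎)`.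
  have hsec : ∀ c, r c = ∑ k, if e (m₀, k) = c then q k else 0 := by
    intro c
    have h := hsecrecy.measure_inter_preimage_eq_mul {c} {m₀} .of_discrete .of_discrete
    have hl : (ℙ : Measure Ω).real {ω | e (𝔐 ω, 𝔎 ω) = c ∧ 𝔐 ω = m₀} = r c * p m₀ := by
      have h_set : {ω | e (𝔐 ω, 𝔎 ω) = c ∧ 𝔐 ω = m₀}
          = (fun ω => e (𝔐 ω, 𝔎 ω)) ⁻¹' {c} ∩ 𝔐 ⁻¹' {m₀} := by ext; simp
      rw [h_set, measureReal_def, h, ENNReal.toReal_mul]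
      rfl
    rw [measureReal_preimage_eq_sum (μ := ℙ) hpair (fun x => e x = c ∧ x.1 = m₀)] at hl
    simp only [Fintype.sum_prod_type, hjoint] at hl
    rw [Finset.sum_eq_single m₀ (fun m _ hm => by simp [hm]) (by simp)] at hl
    apply mul_right_cancel₀ hm₀.ne'
    rw [← hl, Finset.sum_mul]
    refine Finset.sum_congr rfl fun k _ => ?_
    by_cases hc : e (m₀, k) = c <;> simp [hc, mul_comm]
  calc ∑ m, Real.negMulLog (p m)
      = ∑ k, q k * ∑ c, Real.negMulLog (∑ m, if e (m, k) = c then p m else 0) := by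
        simp_rw [sum_negMulLog_push _ (hdec _) p]
        rw [← Finset.sum_mul, hq1, one_mul]
    _ = ∑ c, ∑ k, q k * Real.negMulLog (∑ m, if e (m, k) = c then p m else 0) := by
        simp_rw [Finset.mul_sum]
        exact Finset.sum_comm
    _ ≤ ∑ c, Real.negMulLog (r c) := by
        refine Finset.sum_le_sum fun c _ => ?_
        rw [hmix c]
        refine Real.concaveOn_negMulLog.le_map_sum (fun k _ => hq0 k) hq1 fun k _ => ?_
        rw [Set.mem_Ici]
        refine Finset.sum_nonneg fun m _ => ?_
        split_ifs
        exacts [hp0 m, le_rfl]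
    _ ≤ ∑ c, ∑ k with e (m₀, k) = c, Real.negMulLog (q k) := by
        refine Finset.sum_le_sum fun c _ => ?_
        rw [hsec c, ← Finset.sum_filter]
        exact negMulLog_sum_le _ _ fun k _ => hq0 k
    _ = ∑ k, Real.negMulLog (q k) := Finset.sum_fiberwise _ _ _
end
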